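/- Explicit formula for the (p,q)-blossom: let n ≥ 1, let p, q be reals with 0 < q < p, and let S(t) = Σ_{k=0}^{n} a_k t^k be a real polynomial of degree at most n. Then the function s(u_1, …, u_n) = Σ_{k=0}^{n} a_k φ_{n,k}(u_1, …, u_n) / ((pq)^{k(k−1)/2} [n choose k]_{p,q}) is symmetric, multiaffine, and satisfies s(p^{n−1}t, p^{n−2}q t, …, q^{n−1}t) = S(t) for all real t; that is, s is the (p,q)-blossom of S. -/

import Mathlib

/-- The (p,q)-integer `[n]_{p,q} = Σ_{j=0}^{n-1} p^{n-1-j} q^j`. -/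
noncomputable def pqInt (p q : ℝ) (n : ℕ) : ℝ :=
  ∑ j ∈ Finset.range n, p ^ (n - 1 - j) * q ^ j

/-- The (p,q)-factorial `[n]_{p,q}! = ∏_{j=1}^{n} [j]_{p,q}`. -/
noncomputable def pqFact (p q : ℝ) : ℕ → ℝ
  | 0 => 1
  | n + 1 => pqFact p q n * pqInt p q (n + 1)

/-- The (p,q)-binomial coefficient `[n choose k]_{p,q}`. -/
noncomputable def pqBinom (p q : ℝ) (n k : ℕ) : ℝ :=
  pqFact p q n / (pqFact p q k * pqFact p q (n - k))

/-- The (p,q)-Bernstein basis function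
`B_k^n(t;p,q) = p^{k(k-1)/2 - n(n-1)/2} [n choose k]_{p,q} t^k ∏_{s=0}^{n-k-1} (p^s - q^s t)`. -/
noncomputable def pqBernstein (p q : ℝ) (n k : ℕ) (t : ℝ) : ℝ :=
  p ^ (k * (k - 1) / 2) / p ^ (n * (n - 1) / 2) * pqBinom p q n k * t ^ k *
    ∏ s ∈ Finset.range (n - k), (p ^ s - q ^ s * t)

/-- The `k`-th elementary symmetric polynomial in `n` variables:
`φ_{n,k}(u_1, …, u_n) = Σ_{1 ≤ i_1 < … < i_k ≤ n} u_{i_1} ⋯ u_{i_k}`. -/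
noncomputable def esymmEval (n k : ℕ) (u : Fin n → ℝ) : ℝ :=
  ∑ S ∈ Finset.powersetCard k (Finset.univ : Finset (Fin n)), ∏ i ∈ S, u i

/-- A function `f : ℝ^n → ℝ` is symmetric if it is invariant under all permutations
of its arguments. -/
def IsSymmetricFn (n : ℕ) (f : (Fin n → ℝ) → ℝ) : Prop :=
  ∀ (σ : Equiv.Perm (Fin n)) (u : Fin n → ℝ), f (fun i => u (σ i)) = f u

/-- A function `f : ℝ^n → ℝ` is multiaffine if, fixing all variables except the `j`-th,
the resulting one-variable function is affine (degree at most one). -/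
def IsMultiaffine (n : ℕ) (f : (Fin n → ℝ) → ℝ) : Prop :=
  ∀ (j : Fin n) (u : Fin n → ℝ), ∃ a b : ℝ,
    ∀ x : ℝ, f (Function.update u j x) = a * x + b

lemma pqInt_pos' (p q : ℝ) (hp : 0 < p) (hq : 0 < q) (n : ℕ) : 0 < pqInt p q (n + 1) := by
  unfold pqInt
  exact Finset.sum_pos (fun j _ => by positivity) ⟨0, by simp⟩

lemma pqFact_pos' (p q : ℝ) (hp : 0 < p) (hq : 0 < q) (n : ℕ) : 0 < pqFact p q n := by
  induction n with
  | zero => simp [pqFact]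
  | succ n ih => exact mul_pos ih (pqInt_pos' p q hp hq n)

lemma pqInt_add (p q : ℝ) (a b : ℕ) :
    pqInt p q (a + b) = p ^ b * pqInt p q a + q ^ a * pqInt p q b := by
  unfold pqInt
  rw [Finset.sum_range_add, Finset.mul_sum, Finset.mul_sum]
  congr 1
  · refine Finset.sum_congr rfl fun j hj => ?_
    have hj := Finset.mem_range.1 hj
    have h : a + b - 1 - j = b + (a - 1 - j) := by omega
    rw [h, pow_add]; ring
  · refine Finset.sum_congr rfl fun j hj => ?_
    have hj := Finset.mem_range.1 hj
    have h : a + b - 1 - (a + j) = b - 1 - j := by omega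
    rw [h, pow_add]; ring

lemma pqBinom_rec (p q : ℝ) (hp : 0 < p) (hq : 0 < q) (m k : ℕ) :
    pqBinom p q (m + 1 + k + 1) (k + 1) =
      p ^ (k + 1) * pqBinom p q (m + 1 + k) (k + 1) + q ^ (m + 1) * pqBinom p q (m + 1 + k) k := by
  unfold pqBinom
  have e1 : m + 1 + k + 1 - (k + 1) = m + 1 := by omega
  have e2 : m + 1 + k - (k + 1) = m := by omega
  have e3 : m + 1 + k - k = m + 1 := by omega
  rw [e1, e2, e3]
  have h := pqInt_add p q (m + 1) (k + 1)
  have h1 := (pqFact_pos' p q hp hq k).ne'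
  have h2 := (pqFact_pos' p q hp hq m).ne'
  have h3 := (pqInt_pos' p q hp hq k).ne'
  have h4 := (pqInt_pos' p q hp hq m).ne'
  have h5 : pqFact p q (m + 1 + k + 1) = pqFact p q (m + 1 + k) * pqInt p q (m + 1 + (k + 1)) := rfl
  have h6 : pqFact p q (m + 1) = pqFact p q m * pqInt p q (m + 1) := rfl
  have h7 : pqFact p q (k + 1) = pqFact p q k * pqInt p q (k + 1) := rfl
  rw [h5, h6, h7, h]
  generalize pqFact p q (m + 1 + k) = F
  field_simp

/-- Elementary symmetric sums over a range. -/
noncomputable def rangeEsymm (n k : ℕ) (f : ℕ → ℝ) : ℝ :=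
  ∑ S ∈ Finset.powersetCard k (Finset.range n), ∏ i ∈ S, f i

lemma rangeEsymm_succ (n k : ℕ) (f : ℕ → ℝ) :
    rangeEsymm (n + 1) (k + 1) f = rangeEsymm n (k + 1) f + f n * rangeEsymm n k f := by
  unfold rangeEsymm
  have hn : ∀ S ∈ Finset.powersetCard k (Finset.range n), n ∉ S := by
    intro S hS h
    have := (Finset.mem_powersetCard.1 hS).1 h
    simp at this
  rw [Finset.range_add_one, Finset.powersetCard_succ_insert (by simp), Finset.sum_union,
    Finset.sum_image, Finset.mul_sum]
  · congr 1
    exact Finset.sum_congr rfl fun S hS => Finset.prod_insert (hn S hS)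
  · intro S hS T hT h
    have := congrArg (fun U => Finset.erase U n) h
    simpa [Finset.erase_insert (hn S hS), Finset.erase_insert (hn T hT)] using this
  · rw [Finset.disjoint_left]
    intro S hS hS'
    obtain ⟨T, _, rfl⟩ := Finset.mem_image.1 hS'
    have := (Finset.mem_powersetCard.1 hS).1 (Finset.mem_insert_self n T)
    simp at this

lemma esymmEval_eq_range (n k : ℕ) (f : ℕ → ℝ) :
    esymmEval n k (fun i => f i) = rangeEsymm n k f := by
  unfold esymmEval rangeEsymm
  have h : Finset.range n = (Finset.univ : Finset (Fin n)).map Fin.valEmbedding := by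
    ext i; simp [Fin.exists_iff]
  rw [h, Finset.powersetCard_map, Finset.sum_map]
  refine Finset.sum_congr rfl fun S _ => ?_
  simp [Finset.mapEmbedding_apply]

lemma rangeEsymm_congr (n k : ℕ) (f g : ℕ → ℝ) (h : ∀ i < n, f i = g i) :
    rangeEsymm n k f = rangeEsymm n k g := by
  refine Finset.sum_congr rfl fun S hS => Finset.prod_congr rfl fun i hi => h i ?_
  exact Finset.mem_range.1 ((Finset.mem_powersetCard.1 hS).1 hi)

lemma pqBinom_zero' (p q : ℝ) (hp : 0 < p) (hq : 0 < q) (n : ℕ) : pqBinom p q n 0 = 1 := by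
  simp [pqBinom, pqFact, (pqFact_pos' p q hp hq n).ne']

lemma pqBinom_self' (p q : ℝ) (hp : 0 < p) (hq : 0 < q) (n : ℕ) : pqBinom p q n n = 1 := by
  simp [pqBinom, pqFact, (pqFact_pos' p q hp hq n).ne']

lemma tri_succ (k : ℕ) : (k + 1) * (k + 1 - 1) / 2 = k * (k - 1) / 2 + k := by
  rw [← Finset.sum_range_id_mul_two, ← Finset.sum_range_id_mul_two, Finset.sum_range_succ]
  omega

lemma rangeEsymm_diag (p q : ℝ) (hp : 0 < p) (hq : 0 < q) (n : ℕ) : ∀ (k : ℕ), k ≤ n → ∀ t : ℝ,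
    rangeEsymm n k (fun i => p ^ (n - 1 - i) * q ^ i * t) =
      (p * q) ^ (k * (k - 1) / 2) * pqBinom p q n k * t ^ k := by
  induction n with
  | zero =>
    intro k hk t
    obtain rfl : k = 0 := by omega
    simp [rangeEsymm, pqBinom_zero' p q hp hq]
  | succ n ih =>
    intro k hk t
    cases k with
    | zero => simp [rangeEsymm, pqBinom_zero' p q hp hq]
    | succ k =>
      have hc : ∀ j, rangeEsymm n j (fun i => p ^ (n + 1 - 1 - i) * q ^ i * t) =
          rangeEsymm n j (fun i => p ^ (n - 1 - i) * q ^ i * (p * t)) := by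
        intro j
        refine rangeEsymm_congr _ _ _ _ fun i hi => ?_
        have : n + 1 - 1 - i = (n - 1 - i) + 1 := by omega
        rw [this, pow_succ]; ring
      rw [rangeEsymm_succ, hc, hc, ih k (by omega), tri_succ]
      rcases Nat.lt_or_ge k n with h | h
      · rw [ih (k + 1) h, tri_succ]
        obtain ⟨m, rfl⟩ : ∃ m, n = m + 1 + k := ⟨n - k - 1, by omega⟩
        rw [pqBinom_rec p q hp hq]
        simp only [Nat.add_sub_cancel, Nat.sub_self, pow_zero]
        ring
      · obtain rfl : k = n := by omega
        have h0 : rangeEsymm k (k + 1) (fun i => p ^ (k - 1 - i) * q ^ i * (p * t)) = 0 := by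
          unfold rangeEsymm
          rw [Finset.powersetCard_eq_empty.2 (by simp), Finset.sum_empty]
        rw [h0, pqBinom_self' p q hp hq, pqBinom_self' p q hp hq]
        simp only [Nat.add_sub_cancel, Nat.sub_self, pow_zero]
        ring

lemma esymmEval_symm (n k : ℕ) (σ : Equiv.Perm (Fin n)) (u : Fin n → ℝ) :
    esymmEval n k (fun i => u (σ i)) = esymmEval n k u := by
  unfold esymmEval
  refine Finset.sum_equiv σ.finsetCongr ?_ ?_
  · intro S; simp [Finset.mem_powersetCard]
  · intro S _; simp

lemma esymmEval_affine (n k : ℕ) (j : Fin n) (u : Fin n → ℝ) : ∃ a b : ℝ,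
    ∀ x : ℝ, esymmEval n k (Function.update u j x) = a * x + b := by
  have h : ∀ S : Finset (Fin n), ∃ a b : ℝ, ∀ x : ℝ,
      ∏ i ∈ S, Function.update u j x i = a * x + b := by
    intro S
    by_cases hj : j ∈ S
    · refine ⟨∏ i ∈ S \ {j}, u i, 0, fun x => ?_⟩
      rw [Finset.prod_update_of_mem hj]; ring
    · refine ⟨0, ∏ i ∈ S, u i, fun x => ?_⟩
      rw [Finset.prod_update_of_notMem hj]; ring
  choose a b hab using h
  refine ⟨∑ S ∈ Finset.powersetCard k Finset.univ, a S,
    ∑ S ∈ Finset.powersetCard k Finset.univ, b S, fun x => ?_⟩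
  unfold esymmEval
  rw [Finset.sum_mul, ← Finset.sum_add_distrib]
  exact Finset.sum_congr rfl fun S _ => hab S x

/-- explicit formula for the (p,q)-blossom of
`S(t) = Σ_{k=0}^{n} a_k t^k`, namely
`s(u_1, …, u_n) = Σ_{k=0}^{n} a_k φ_{n,k}(u_1, …, u_n) / ((pq)^{k(k-1)/2} [n choose k]_{p,q})`. -/
theorem pq_blossom_explicit_formula (n : ℕ) (hn : 1 ≤ n)
    (p q : ℝ) (h0 : 0 < q) (hqp : q < p)
    (a : ℕ → ℝ) (S : ℝ → ℝ)
    (hS : ∀ t : ℝ, S t = ∑ k ∈ Finset.range (n + 1), a k * t ^ k)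
    (s : (Fin n → ℝ) → ℝ)
    (hs : ∀ u, s u = ∑ k ∈ Finset.range (n + 1),
      a k * esymmEval n k u / ((p * q) ^ (k * (k - 1) / 2) * pqBinom p q n k)) :
    IsSymmetricFn n s ∧ IsMultiaffine n s ∧
      ∀ t : ℝ, s (fun i => p ^ (n - 1 - (i : ℕ)) * q ^ (i : ℕ) * t) = S t := by
  have hp : 0 < p := h0.trans hqp
  refine ⟨fun σ u => ?_, fun j u => ?_, fun t => ?_⟩
  · simp only [hs, esymmEval_symm]
  · choose A B hAB using fun k => esymmEval_affine n k j u
    refine ⟨∑ k ∈ Finset.range (n + 1), a k * A k / ((p * q) ^ (k * (k - 1) / 2) * pqBinom p q n k),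
      ∑ k ∈ Finset.range (n + 1), a k * B k / ((p * q) ^ (k * (k - 1) / 2) * pqBinom p q n k),
      fun x => ?_⟩
    rw [hs, Finset.sum_mul, ← Finset.sum_add_distrib]
    refine Finset.sum_congr rfl fun k _ => ?_
    rw [hAB]; ring
  · rw [hs, hS]
    refine Finset.sum_congr rfl fun k hk => ?_
    have hk : k ≤ n := by have := Finset.mem_range.1 hk; omega
    rw [esymmEval_eq_range n k (fun i => p ^ (n - 1 - i) * q ^ i * t),
      rangeEsymm_diag p q hp h0 n k hk]
    have hb : 0 < pqBinom p q n k :=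
      div_pos (pqFact_pos' p q hp h0 n)
        (mul_pos (pqFact_pos' p q hp h0 k) (pqFact_pos' p q hp h0 (n - k)))
    have hd : (p * q) ^ (k * (k - 1) / 2) * pqBinom p q n k ≠ 0 := by positivity
    rw [← mul_assoc, mul_comm (a k), mul_assoc, mul_assoc, mul_div_assoc] 
    field_simp
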